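/- arXiv:math/9412219 — 2 statements merged into one kernel-verified Lean document; each statement's English description precedes it below -/
import Mathlib

section
/- Let X be a real Banach space, F a norming subspace of X*, and σ the σ(X,F) topology. Then the following are equivalent: (a) every nonempty σ-closed, norm-bounded, convex set in X is the σ-closed convex hull of its set of farthest points; (b) X has the F-MIP and every nonempty σ-closed, norm-bounded, convex set in X has Property (R). -/
open Metric Set Pointwise

/-- The farthest distance map `r_K(x) = sup {‖z - x‖ : z ∈ K}`. -/
noncomputable def rFar {X : Type*} [NormedAddCommGroup X] (K : Set X) (x : X) : ℝ :=
  sSup ((fun z => ‖z - x‖) '' K)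

/-- `Q_K(x)`: the set of points of `K` farthest from `x`. -/
def QFar {X : Type*} [NormedAddCommGroup X] (K : Set X) (x : X) : Set X :=
  {z ∈ K | ‖z - x‖ = rFar K x}

/-- `D(K)`: the set of points admitting a farthest point in `K`. -/
def DFar {X : Type*} [NormedAddCommGroup X] (K : Set X) : Set X :=
  {x | (QFar K x).Nonempty}

/-- `b(K)`: the set of farthest points of `K`. -/
def farPoints {X : Type*} [NormedAddCommGroup X] (K : Set X) : Set X :=
  ⋃ x ∈ DFar K, QFar K x

/-- The crescent `C(K, x, α) = {z ∈ K : ‖z - x‖ > r_K(x) - α}`. -/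
def crescent {X : Type*} [NormedAddCommGroup X] (K : Set X) (x : X) (α : ℝ) : Set X :=
  {z ∈ K | rFar K x - α < ‖z - x‖}

/-- Property (R): every crescent of `K` contains a farthest point of `K`. -/
def PropR {X : Type*} [NormedAddCommGroup X] (K : Set X) : Prop :=
  ∀ (x : X) (α : ℝ), 0 < α → ∃ z ∈ crescent K x α, z ∈ farPoints K

/-- A set is admissible if it is the intersection of all closed balls containing it. -/
def Admissible {X : Type*} [NormedAddCommGroup X] (K : Set X) : Prop :=
  K = ⋂ p ∈ {p : X × ℝ | K ⊆ closedBall p.1 p.2}, closedBall p.1 p.2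

/-- The `σ(X,F)` topology on `X`: the topology induced by the functionals in `F`. -/
def sigmaTop {X : Type*} [NormedAddCommGroup X] [NormedSpace ℝ X]
    (F : Submodule ℝ (X →L[ℝ] ℝ)) : TopologicalSpace X :=
  TopologicalSpace.induced (fun x => fun f : F => (f : X →L[ℝ] ℝ) x) inferInstance

/-- `F` is a norming subspace of `X*`: `‖x‖ = sup {|f x| : f ∈ F, ‖f‖ ≤ 1}`. -/
def IsNorming {X : Type*} [NormedAddCommGroup X] [NormedSpace ℝ X]
    (F : Submodule ℝ (X →L[ℝ] ℝ)) : Prop :=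
  ∀ x : X, ‖x‖ = sSup {r : ℝ | ∃ f ∈ F, ‖f‖ ≤ 1 ∧ r = |f x|}

/-!
Property (R) of a bounded set `K` says that every closed ball containing the farthest points of `K`
contains `K`. As `F` is norming, closed balls are σ-closed, so (a) yields Property (R); conversely,
if the σ-closed convex hull of the farthest points is an intersection of balls, each of these
contains `K`.

For (a) ⇒ `F`-MIP, a point `x` outside a σ-closed bounded convex set `K` has to be separated from
`K` by a ball. Thicken `K` to a set `C` lying in a half-space `{f ≤ c}` with `f ∈ F` and `c < f x`,
and let `M` be the σ-closed convex hull of `C ∪ {x}`. By (a), `M` has a farthest point `z`, say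
from `p`, with `c < f z`. A convex lower semicontinuous function that attains its supremum over `M`
in the cap `{f > c}` also attains it at `x`; for the distance to `p` this gives
`C ⊆ closedBall p (dist x p)`, and undoing the thickening leaves a ball around `p` that contains
`K` but not `x`.
-/

open scoped Topology

section ConvexHull

variable {E : Type*} [AddCommMonoid E] [Module ℝ E] [TopologicalSpace E] {f φ : E → ℝ} {s : Set E}
  {c : ℝ} {x z : E}

theorem le_of_mem_closure_convexHull (hf : ConvexOn ℝ univ f) (hf_lsc : LowerSemicontinuous f)
    (hs : ∀ y ∈ s, f y ≤ c) (hx : x ∈ closure (convexHull ℝ s)) : f x ≤ c := by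
  have hull_subset : convexHull ℝ s ⊆ f ⁻¹' Iic c :=
    convexHull_min hs (by simpa [preimage] using hf.convex_le c)
  exact closure_minimal hull_subset (hf_lsc.isClosed_preimage c) hx

theorem le_of_mem_closure_convexHull_insert (hφ : ConvexOn ℝ univ φ)
    (hφ_lsc : LowerSemicontinuous φ) (hf : ConvexOn ℝ univ f) (hf_lsc : LowerSemicontinuous f)
    (hs : ∀ y ∈ s, f y ≤ c) (hx : c < f x) (hz : z ∈ closure (convexHull ℝ (insert x s)))
    (hfz : c < f z) (hmax : ∀ y ∈ s, φ y ≤ φ z) : φ z ≤ φ x := by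
  by_contra! hlt
  -- The slope for which `φ + t • f` takes the value `φ z + t * c` at `x`.
  set t : ℝ := (φ z - φ x) / (f x - c)
  have ht : 0 < t := div_pos (sub_pos.2 hlt) (sub_pos.2 hx)
  have ht_mul : t * (f x - c) = φ z - φ x := div_mul_cancel₀ _ (sub_pos.2 hx).ne'
  have tilt_convex : ConvexOn ℝ univ (fun y => φ y + t * f y) := hφ.add (hf.smul ht.le)
  have tilt_lsc : LowerSemicontinuous (fun y => φ y + t * f y) :=
    hφ_lsc.add ((continuous_const_mul t).comp_lowerSemicontinuous hf_lsc
      (monotone_mul_left_of_nonneg ht.le))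
  have tilt_le : ∀ y ∈ insert x s, φ y + t * f y ≤ φ z + t * c := by
    rintro y (rfl | hy)
    · linarith
    · exact add_le_add (hmax y hy) (mul_le_mul_of_nonneg_left (hs y hy) ht.le)
  have tilt_z := le_of_mem_closure_convexHull tilt_convex tilt_lsc tilt_le hz
  exact hfz.not_ge (le_of_mul_le_mul_left (by linarith) ht)

end ConvexHull

theorem exists_thickening_le_of_forall_lt {α : Type*} [PseudoMetricSpace α] {f : α → ℝ}
    {K : Set α} {u c : ℝ} (hf : UniformContinuous f) (hK : ∀ y ∈ K, f y < u) (huc : u < c) :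
    ∃ ε > 0, ∀ y ∈ thickening ε K, f y ≤ c := by
  obtain ⟨ε, hε, hfε⟩ := Metric.uniformContinuous_iff.1 hf (c - u) (sub_pos.2 huc)
  refine ⟨ε, hε, fun y hy => ?_⟩
  obtain ⟨k, hk, hyk⟩ := mem_thickening_iff.1 hy
  have hfyk : f y - f k < c - u := (le_abs_self _).trans_lt (hfε hyk)
  linarith [hK k hk]

section Ball

variable {X : Type*} [NormedAddCommGroup X] [NormedSpace ℝ X] [Nontrivial X] {K : Set X} {x p : X}
  {ε r : ℝ}

theorem dist_add_le_of_ball_subset_closedBall (hε : 0 < ε) (h : ball x ε ⊆ closedBall p r) :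
    dist x p + ε ≤ r := by
  obtain ⟨v, hv, hray⟩ : ∃ v : X, ‖v‖ = ε ∧ SameRay ℝ (x - p) v := by
    rcases eq_or_ne x p with rfl | hxp
    · obtain ⟨v, hv⟩ := exists_norm_eq X hε.le
      exact ⟨v, hv, by simp⟩
    · have hpos : 0 < ‖x - p‖ := norm_sub_pos_iff.2 hxp
      refine ⟨(ε / ‖x - p‖) • (x - p), ?_, SameRay.sameRay_nonneg_smul_right _ (by positivity)⟩
      rw [norm_smul, Real.norm_of_nonneg (by positivity), div_mul_cancel₀ _ hpos.ne']
  have hmem : x + v ∈ closedBall p r := by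
    refine closure_minimal h isClosed_closedBall ?_
    rw [closure_ball x hε.ne', mem_closedBall, dist_self_add_left, hv]
  rwa [mem_closedBall, dist_eq_norm, add_sub_right_comm, hray.norm_add, hv, ← dist_eq_norm] at hmem

theorem subset_closedBall_sub_of_thickening_subset (hε : 0 < ε)
    (h : thickening ε K ⊆ closedBall p r) : K ⊆ closedBall p (r - ε) := fun _ hx =>
  le_sub_right_of_add_le <|
    dist_add_le_of_ball_subset_closedBall hε ((ball_subset_thickening hx ε).trans h)

end Ball

section FarthestPoints

variable {X : Type*} [NormedAddCommGroup X] {K : Set X} {x z : X} {r : ℝ}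

theorem rFar_le_iff (hne : K.Nonempty) (hb : Bornology.IsBounded K) :
    rFar K x ≤ r ↔ K ⊆ closedBall x r := by
  have hbdd : BddAbove ((fun z => ‖z - x‖) '' K) := by
    obtain ⟨R, hR⟩ := hb.subset_closedBall x
    exact ⟨R, forall_mem_image.2 fun z hz => (dist_eq_norm z x).symm.trans_le (hR hz)⟩
  rw [rFar, csSup_le_iff hbdd (hne.image _), forall_mem_image]
  simp only [subset_def, mem_closedBall, dist_eq_norm]

theorem mem_farPoints_iff : z ∈ farPoints K ↔ z ∈ K ∧ ∃ x, ‖z - x‖ = rFar K x := by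
  simp only [farPoints, DFar, QFar, mem_iUnion, mem_ofPred_eq, exists_prop]
  exact ⟨fun ⟨x, _, hz, hzx⟩ => ⟨hz, x, hzx⟩, fun ⟨hz, x, hzx⟩ => ⟨x, ⟨z, hz, hzx⟩, hz, hzx⟩⟩

theorem farPoints_subset : farPoints K ⊆ K := fun _ hz => (mem_farPoints_iff.1 hz).1

theorem exists_subset_closedBall_dist_of_mem_farPoints (hb : Bornology.IsBounded K)
    (hz : z ∈ farPoints K) : ∃ p, K ⊆ closedBall p (dist z p) := by
  obtain ⟨hzK, p, hp⟩ := mem_farPoints_iff.1 hz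
  exact ⟨p, (rFar_le_iff ⟨z, hzK⟩ hb).1 (by rw [dist_eq_norm, hp])⟩

theorem propR_iff_forall_closedBall (hne : K.Nonempty) (hb : Bornology.IsBounded K) :
    PropR K ↔ ∀ x r, farPoints K ⊆ closedBall x r → K ⊆ closedBall x r := by
  constructor
  · intro hR x r hfar
    rw [← rFar_le_iff hne hb]
    by_contra! hlt
    obtain ⟨z, hz, hzfar⟩ := hR x (rFar K x - r) (sub_pos.2 hlt)
    have hzx : r < dist z x := by simpa only [sub_sub_cancel, dist_eq_norm] using hz.2
    exact hzx.not_ge (hfar hzfar)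
  · intro hball x α hα
    have hK : ¬ K ⊆ closedBall x (rFar K x - α) := fun h =>
      ((rFar_le_iff hne hb).2 h).not_gt (sub_lt_self _ hα)
    obtain ⟨z, hz, hzx⟩ := not_subset.1 (mt (hball x _) hK)
    rw [mem_closedBall, not_le, dist_eq_norm] at hzx
    exact ⟨z, ⟨farPoints_subset hz, hzx⟩, hz⟩

theorem admissible_iff_forall_notMem :
    Admissible K ↔ ∀ x ∉ K, ∃ p r, K ⊆ closedBall p r ∧ x ∉ closedBall p r := by
  have hsubset : K ⊆ ⋂ p ∈ {p : X × ℝ | K ⊆ closedBall p.1 p.2}, closedBall p.1 p.2 :=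
    subset_iInter₂ fun _ hp => hp
  have hiff : Admissible K ↔ (⋂ p ∈ {p : X × ℝ | K ⊆ closedBall p.1 p.2}, closedBall p.1 p.2) ⊆ K :=
    ⟨fun h => h.superset, hsubset.antisymm⟩
  rw [hiff, ← compl_subset_compl]
  simp [subset_def]

end FarthestPoints

theorem exists_forall_lt_of_isClosed_weakBilin {E G : Type*} [AddCommGroup E] [Module ℝ E]
    [AddCommGroup G] [Module ℝ G] (B : E →ₗ[ℝ] G →ₗ[ℝ] ℝ) {s : Set (WeakBilin B)}
    (hs : Convex ℝ s) (hc : IsClosed s) {x : WeakBilin B} (hx : x ∉ s) :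
    ∃ y u, (∀ a ∈ s, B a y < u) ∧ u < B x y := by
  obtain ⟨g, u, hsu, hux⟩ := geometric_hahn_banach_closed_point hs hc hx
  obtain ⟨y, rfl⟩ := LinearMap.dualEmbedding_surjective B g
  exact ⟨y, u, hsu, hux⟩

section SigmaTopology

variable {X : Type*} [NormedAddCommGroup X] [NormedSpace ℝ X] {F : Submodule ℝ (X →L[ℝ] ℝ)}
  {K s : Set X}

/-- The evaluation pairing `⟨x, f⟩ = f x` between `X` and `F`, whose weak topology on `X` is
definitionally `sigmaTop F`. -/
def evalPairing (F : Submodule ℝ (X →L[ℝ] ℝ)) : X →ₗ[ℝ] F →ₗ[ℝ] ℝ :=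
  ((topDualPairing ℝ X).domRestrict F).flip

theorem continuous_sigmaTop {f : X →L[ℝ] ℝ} (hf : f ∈ F) : Continuous[sigmaTop F, _] f :=
  WeakBilin.eval_continuous (evalPairing F) ⟨f, hf⟩

theorem convex_closure_sigmaTop (hs : Convex ℝ s) : Convex ℝ (closure[sigmaTop F] s) := by
  let _ := sigmaTop F
  have : (evalPairing F).IsWeak := ⟨rfl⟩
  have := LinearMap.IsWeak.isTopologicalAddGroup (E := X) (F := F) (evalPairing F)
  have := LinearMap.IsWeak.continuousSMul (evalPairing F)
  exact hs.closure

theorem exists_mem_forall_lt_of_isClosed_sigmaTop (hs : Convex ℝ s) (hc : IsClosed[sigmaTop F] s)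
    {x : X} (hx : x ∉ s) : ∃ f ∈ F, ∃ u, (∀ a ∈ s, f a < u) ∧ u < f x := by
  have hc_weak : IsClosed (X := WeakBilin (evalPairing F)) s := hc
  obtain ⟨f, u, hsu, hux⟩ :=
    exists_forall_lt_of_isClosed_weakBilin (E := X) (G := F) (evalPairing F) hs hc_weak hx
  exact ⟨f, f.2, u, hsu, hux⟩

theorem IsNorming.lowerSemicontinuous_dist (hF : IsNorming F) (p : X) :
    @LowerSemicontinuous X ℝ (sigmaTop F) _ (dist · p) := by
  let _ := sigmaTop F
  intro x r (hr : r < dist x p)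
  have hne : {r : ℝ | ∃ f ∈ F, ‖f‖ ≤ 1 ∧ r = |f (x - p)|}.Nonempty :=
    ⟨0, 0, F.zero_mem, by simp, by simp⟩
  rw [dist_eq_norm, hF (x - p)] at hr
  obtain ⟨_, ⟨f, hf, hf_norm, rfl⟩, hrf⟩ := exists_lt_of_lt_csSup hne hr
  have hcont : Continuous fun z => |f (z - p)| := by
    simp only [map_sub]
    exact ((continuous_sigmaTop hf).sub continuous_const).abs
  filter_upwards [hcont.continuousAt.eventually (lt_mem_nhds hrf)] with z hz
  calc r < |f (z - p)| := hz
    _ ≤ 1 * ‖z - p‖ := f.le_of_opNorm_le hf_norm _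
    _ = dist z p := by rw [one_mul, dist_eq_norm]

theorem IsNorming.closure_convexHull_subset_closedBall (hF : IsNorming F) {p : X} {r : ℝ}
    (hs : s ⊆ closedBall p r) : closure[sigmaTop F] (convexHull ℝ s) ⊆ closedBall p r := fun _ =>
  @le_of_mem_closure_convexHull X _ _ (sigmaTop F) _ _ _ _ (convexOn_univ_dist p)
    (hF.lowerSemicontinuous_dist p) hs

theorem IsNorming.isBounded_closure_convexHull (hF : IsNorming F) (hs : Bornology.IsBounded s) :
    Bornology.IsBounded (closure[sigmaTop F] (convexHull ℝ s)) := by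
  obtain ⟨R, hR⟩ := hs.subset_closedBall 0
  exact isBounded_closedBall.subset (hF.closure_convexHull_subset_closedBall hR)

theorem IsNorming.exists_subset_closedBall_dist (hF : IsNorming F) (hb : Bornology.IsBounded s)
    {f : X →L[ℝ] ℝ} (hf : f ∈ F) {c : ℝ} (hs : ∀ y ∈ s, f y ≤ c) {x : X} (hx : c < f x)
    {M : Set X} (hM : M = closure[sigmaTop F] (convexHull ℝ (insert x s)))
    (hM_far : M = closure[sigmaTop F] (convexHull ℝ (farPoints M))) :
    ∃ p, s ⊆ closedBall p (dist x p) := by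
  have hf_convex : ConvexOn ℝ univ f := f.toLinearMap.convexOn convex_univ
  let _ := sigmaTop F
  have hf_lsc : LowerSemicontinuous f := (continuous_sigmaTop hf).lowerSemicontinuous
  have insert_subset_M : insert x s ⊆ M :=
    hM ▸ (subset_convexHull ℝ _).trans subset_closure
  obtain ⟨z, hz, hfz⟩ : ∃ z ∈ farPoints M, c < f z := by
    by_contra! hle
    have hxM : x ∈ closure (convexHull ℝ (farPoints M)) :=
      hM_far.subset (insert_subset_M (mem_insert x s))
    exact hx.not_ge (le_of_mem_closure_convexHull hf_convex hf_lsc hle hxM)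
  obtain ⟨p, hp⟩ := exists_subset_closedBall_dist_of_mem_farPoints
    (hM ▸ hF.isBounded_closure_convexHull (hb.insert x)) hz
  have s_subset : s ⊆ closedBall p (dist z p) :=
    (subset_insert x s).trans (insert_subset_M.trans hp)
  have hzx : dist z p ≤ dist x p :=
    le_of_mem_closure_convexHull_insert (convexOn_univ_dist p) (hF.lowerSemicontinuous_dist p)
      hf_convex hf_lsc hs hx (hM.subset (farPoints_subset hz)) hfz s_subset
  exact ⟨p, s_subset.trans (closedBall_subset_closedBall hzx)⟩

theorem IsNorming.admissible_of_forall_eq_closure_convexHull_farPoints (hF : IsNorming F)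
    (hfar : ∀ M : Set X, M.Nonempty → IsClosed[sigmaTop F] M → Bornology.IsBounded M →
      Convex ℝ M → M = closure[sigmaTop F] (convexHull ℝ (farPoints M)))
    (hc : IsClosed[sigmaTop F] K) (hb : Bornology.IsBounded K) (hconv : Convex ℝ K) :
    Admissible K := by
  refine admissible_iff_forall_notMem.2 fun x hx => ?_
  obtain ⟨f, hf, u, hKu, hux⟩ := exists_mem_forall_lt_of_isClosed_sigmaTop hconv hc hx
  obtain ⟨c, huc, hcx⟩ := exists_between hux
  obtain ⟨ε, hε, hfc⟩ := exists_thickening_le_of_forall_lt f.uniformContinuous hKu huc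
  obtain ⟨p, hp⟩ := hF.exists_subset_closedBall_dist hb.thickening hf hfc hcx rfl <|
    hfar _ ⟨x, @subset_closure X (sigmaTop F) _ _ (subset_convexHull ℝ _ (mem_insert x _))⟩
      (@isClosed_closure X (sigmaTop F) _)
      (hF.isBounded_closure_convexHull (hb.thickening.insert x))
      (convex_closure_sigmaTop (convex_convexHull ℝ _))
  have hx_ball : x ∉ closedBall p (dist x p - ε) := fun h => hε.not_ge (by simpa using h)
  refine ⟨p, dist x p - ε, fun k hk => ?_, hx_ball⟩
  have : Nontrivial X := nontrivial_of_ne k x (ne_of_mem_of_not_mem hk hx)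
  exact subset_closedBall_sub_of_thickening_subset hε hp hk

theorem IsNorming.propR_of_eq_closure_convexHull_farPoints (hF : IsNorming F) (hne : K.Nonempty)
    (hb : Bornology.IsBounded K) (hK : K = closure[sigmaTop F] (convexHull ℝ (farPoints K))) :
    PropR K :=
  (propR_iff_forall_closedBall hne hb).2 fun _ _ hball =>
    hK.subset.trans (hF.closure_convexHull_subset_closedBall hball)

theorem PropR.eq_closure_convexHull_farPoints (hR : PropR K)
    (hadm : Admissible (closure[sigmaTop F] (convexHull ℝ (farPoints K))))
    (hc : IsClosed[sigmaTop F] K) (hb : Bornology.IsBounded K) (hconv : Convex ℝ K) :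
    K = closure[sigmaTop F] (convexHull ℝ (farPoints K)) := by
  let _ := sigmaTop F
  refine Subset.antisymm (fun x hxK => ?_)
    (closure_minimal (convexHull_min farPoints_subset hconv) hc)
  by_contra hx
  obtain ⟨p, r, hball, hxp⟩ := admissible_iff_forall_notMem.1 hadm x hx
  have far_subset : farPoints K ⊆ closedBall p r :=
    ((subset_convexHull ℝ _).trans subset_closure).trans hball
  exact hxp ((propR_iff_forall_closedBall ⟨x, hxK⟩ hb).1 hR p r far_subset hxK)

end SigmaTopology

theorem stmt_2_general {X : Type*} [NormedAddCommGroup X] [NormedSpace ℝ X]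
    (F : Submodule ℝ (X →L[ℝ] ℝ)) (hF : IsNorming F) :
    (∀ K : Set X, K.Nonempty → IsClosed[sigmaTop F] K → Bornology.IsBounded K →
        Convex ℝ K → K = closure[sigmaTop F] (convexHull ℝ (farPoints K))) ↔
    ((∀ K : Set X, IsClosed[sigmaTop F] K → Bornology.IsBounded K → Convex ℝ K →
        Admissible K) ∧
     (∀ K : Set X, K.Nonempty → IsClosed[sigmaTop F] K → Bornology.IsBounded K →
        Convex ℝ K → PropR K)) := by
  constructor
  · intro hfar
    exact ⟨fun K => hF.admissible_of_forall_eq_closure_convexHull_farPoints hfar,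
      fun K hne hc hb hconv =>
        hF.propR_of_eq_closure_convexHull_farPoints hne hb (hfar K hne hc hb hconv)⟩
  · rintro ⟨hMIP, hR⟩ K hne hc hb hconv
    have hull_subset : closure[sigmaTop F] (convexHull ℝ (farPoints K)) ⊆ K :=
      @closure_minimal X (sigmaTop F) _ _ (convexHull_min farPoints_subset hconv) hc
    have hull_admissible := hMIP _ (@isClosed_closure X (sigmaTop F) _) (hb.subset hull_subset)
      (convex_closure_sigmaTop (convex_convexHull ℝ _))
    exact (hR K hne hc hb hconv).eq_closure_convexHull_farPoints hull_admissible hc hb hconv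

/-- Theorem far: every nonempty σ-closed bounded convex set is the σ-closed convex hull of
its farthest points iff `X` has the `F`-MIP and every such set has Property (R). -/
theorem stmt_2 {X : Type*} [NormedAddCommGroup X] [NormedSpace ℝ X] [CompleteSpace X]
    (F : Submodule ℝ (X →L[ℝ] ℝ)) (hF : IsNorming F) :
    (∀ K : Set X, K.Nonempty → @IsClosed X (sigmaTop F) K → Bornology.IsBounded K →
        Convex ℝ K → K = @closure X (sigmaTop F) (convexHull ℝ (farPoints K))) ↔
    ((∀ K : Set X, @IsClosed X (sigmaTop F) K → Bornology.IsBounded K → Convex ℝ K →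
        Admissible K) ∧
     (∀ K : Set X, K.Nonempty → @IsClosed X (sigmaTop F) K → Bornology.IsBounded K →
        Convex ℝ K → PropR K)) :=
  stmt_2_general F hF
end

section
/- Let X be a real Banach space and let K ⊆ X be a nonempty weakly compact set. Then K is almost remotal: the set D(K) = {x ∈ X : Q_K(x) ≠ ∅} contains a dense Gδ subset of X. -/
open Metric Set Pointwise

/-- The weak topology `σ(X, X*)` on `X`. -/
def weakTop (X : Type*) [NormedAddCommGroup X] [NormedSpace ℝ X] : TopologicalSpace X :=
  TopologicalSpace.induced (fun x => fun f : X →L[ℝ] ℝ => f x) inferInstance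

/-! If `f` is a subgradient of the convex `1`-Lipschitz function `r_K` at `x`, then `‖f‖ ≤ 1`, so
`f (x - z) ≤ ‖z - x‖ ≤ r_K x` on `K`. Hence if `sup_{z ∈ K} f (x - z) = r_K x`, a minimizer of `f`
on `K` is a farthest point from `x`. For each `ε > 0`, the inequality
`sup_{z ∈ K} f (x - z) > r_K x - ε` holds for all subgradients at all points of a dense open set:
take `z` almost farthest from `y` and move from `y` a little away from `z`. Baire's theorem lets `ε`
tend to zero. -/

open Bornology

section Subdifferential

variable {E : Type*} [AddCommGroup E] [Module ℝ E] [TopologicalSpace E]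

/-- The subdifferential `∂r(x)` of a real function `r` on a topological vector space, as a set of
continuous linear functionals. -/
def subdifferential (r : E → ℝ) (x : E) : Set (E →L[ℝ] ℝ) :=
  {f | ∀ y, f (y - x) ≤ r y - r x}

theorem subdifferential_nonempty [IsTopologicalAddGroup E] [ContinuousSMul ℝ E] {r : E → ℝ}
    (hr : ConvexOn ℝ univ r) (hc : Continuous r) (x : E) : (subdifferential r x).Nonempty := by
  have hopen : IsOpen {p : E × ℝ | p.1 ∈ univ ∧ r p.1 < p.2} := by
    simpa only [mem_univ, true_and, Function.comp_apply] using
      isOpen_lt (hc.comp continuous_fst) continuous_snd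
  obtain ⟨F, hF⟩ := geometric_hahn_banach_point_open (x := (x, r x)) hr.convex_strict_epigraph
    hopen (by simp)
  set g : E →L[ℝ] ℝ := F.comp (ContinuousLinearMap.inl ℝ E ℝ) with hg
  set c := F (0, 1)
  have F_apply (y : E) (t : ℝ) : F (y, t) = g y + t * c := by
    rw [← smul_eq_mul, ← map_smul]
    simp [hg, ← map_add]
  have separation (y : E) (t : ℝ) (ht : r y < t) : g x + r x * c < g y + t * c := by
    simpa only [F_apply] using hF (y, t) ⟨mem_univ y, ht⟩
  have c_pos : 0 < c := by linarith [separation x (r x + 1) (lt_add_one _)]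
  refine ⟨-(c⁻¹ • g), fun y => ?_⟩
  rw [le_sub_iff_add_le]
  refine le_of_forall_gt_imp_ge_of_dense fun t ht => ?_
  have quotient_le : (g x - g y) / c ≤ t - r x := by
    rw [div_le_iff₀ c_pos]
    linarith [separation y t ht]
  calc (-(c⁻¹ • g)) (y - x) + r x = (g x - g y) / c + r x := by
        simp only [neg_apply, smul_apply, map_sub, smul_eq_mul]
        ring
    _ ≤ t := by linarith

end Subdifferential

theorem apply_le_of_mem_subdifferential {E : Type*} [SeminormedAddCommGroup E] [NormedSpace ℝ E]
    {r : E → ℝ} {C : NNReal} (hr : LipschitzWith C r) {x : E} {f : E →L[ℝ] ℝ}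
    (hf : f ∈ subdifferential r x) (v : E) : f v ≤ C * ‖v‖ := by
  calc f v = f (x + v - x) := by rw [add_sub_cancel_left]
    _ ≤ r (x + v) - r x := hf (x + v)
    _ ≤ C * dist (x + v) x := (le_abs_self _).trans (hr.dist_le_mul _ _)
    _ = C * ‖v‖ := by rw [dist_self_add_left]

section Farthest

variable {X : Type*} [NormedAddCommGroup X] {K : Set X}

theorem norm_sub_le_rFar (hK : IsBounded K) (x : X) {z : X} (hz : z ∈ K) :
    ‖z - x‖ ≤ rFar K x := by
  obtain ⟨C, hC⟩ := hK.exists_norm_le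
  refine le_csSup ⟨C + ‖x‖, ?_⟩ ⟨z, hz, rfl⟩
  rintro _ ⟨w, hw, rfl⟩
  exact (norm_sub_le w x).trans (add_le_add_left (hC w hw) ‖x‖)

theorem rFar_le (hne : K.Nonempty) {x : X} {a : ℝ} (h : ∀ z ∈ K, ‖z - x‖ ≤ a) : rFar K x ≤ a :=
  csSup_le (hne.image _) (forall_mem_image.2 h)

theorem exists_mem_lt_norm_sub_of_lt_rFar (hne : K.Nonempty) {x : X} {a : ℝ} (h : a < rFar K x) :
    ∃ z ∈ K, a < ‖z - x‖ := by
  contrapose! h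
  exact rFar_le hne h

theorem lipschitzWith_rFar (hne : K.Nonempty) (hK : IsBounded K) : LipschitzWith 1 (rFar K) := by
  refine LipschitzWith.of_le_add fun x y => rFar_le hne fun z hz => ?_
  calc ‖z - x‖ ≤ ‖z - y‖ + ‖y - x‖ := norm_sub_le_norm_sub_add_norm_sub z y x
    _ ≤ rFar K y + dist x y := by
      rw [dist_eq_norm', add_le_add_iff_right]
      exact norm_sub_le_rFar hK y hz

variable [NormedSpace ℝ X]

theorem convexOn_rFar (hne : K.Nonempty) (hK : IsBounded K) : ConvexOn ℝ univ (rFar K) := by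
  refine ⟨convex_univ, fun x _ y _ a b ha hb hab => rFar_le hne fun z hz => ?_⟩
  calc ‖z - (a • x + b • y)‖ = ‖a • (z - x) + b • (z - y)‖ := by
        rw [smul_sub, smul_sub, sub_add_sub_comm, ← add_smul, hab, one_smul]
    _ ≤ a * ‖z - x‖ + b * ‖z - y‖ := by
        simpa only [norm_smul_of_nonneg ha, norm_smul_of_nonneg hb]
          using norm_add_le (a • (z - x)) (b • (z - y))
    _ ≤ a • rFar K x + b • rFar K y := by
        simp only [smul_eq_mul]
        gcongr <;> exact norm_sub_le_rFar hK _ hz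

theorem apply_le_norm_of_mem_subdifferential_rFar (hne : K.Nonempty) (hK : IsBounded K) {x : X}
    {f : X →L[ℝ] ℝ} (hf : f ∈ subdifferential (rFar K) x) (v : X) : f v ≤ ‖v‖ := by
  simpa only [NNReal.coe_one, one_mul] using
    apply_le_of_mem_subdifferential (lipschitzWith_rFar hne hK) hf v

/-- The set of points `x` such that `sup_{z ∈ K} f (x - z) > r_K(x) - ε` for every subgradient `f`
of `r_K` at `x`. At a point lying in these sets for all `ε > 0`, the minimizers on `K` of a
subgradient are farthest points. -/
def almostSupportedSet (K : Set X) (ε : ℝ) : Set X :=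
  {x | ∀ f ∈ subdifferential (rFar K) x, ∃ z ∈ K, rFar K x - ε < f (x - z)}

-- Since `y` is a convex combination of `z` and `y + l • (y - z)`, the subgradient inequality
-- between `x` and `y` bounds `f (x - z)` from below.
theorem mul_rFar_sub_apply_le (hK : IsBounded K) {x y z : X} (hz : z ∈ K) {f : X →L[ℝ] ℝ}
    (hf : f ∈ subdifferential (rFar K) x) {l : ℝ} (hl : 0 ≤ l) :
    l * (rFar K x - f (x - z)) ≤
      (1 + l) * (rFar K y - ‖z - y‖) + 2 * ‖x - (y + l • (y - z))‖ := by
  set w := y + l • (y - z) with hw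
  have subgradient_le : f (w - x) - l * f (x - z) ≤ (1 + l) * (rFar K y - rFar K x) := by
    have combination : (1 + l) • (y - x) = (w - x) - l • (x - z) := by
      rw [hw]
      module
    calc f (w - x) - l * f (x - z) = (1 + l) * f (y - x) := by
          simp only [← smul_eq_mul, ← map_smul, ← map_sub, combination]
      _ ≤ (1 + l) * (rFar K y - rFar K x) := by
          gcongr
          exact hf y
  have apply_le : f (x - w) ≤ ‖x - w‖ :=
    apply_le_norm_of_mem_subdifferential_rFar ⟨z, hz⟩ hK hf (x - w)
  have le_rFar : (1 + l) * ‖z - y‖ - ‖x - w‖ ≤ rFar K x := by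
    rw [sub_le_iff_le_add]
    calc (1 + l) * ‖z - y‖ = ‖z - w‖ := by
          rw [← norm_smul_of_nonneg (by positivity), hw]
          congr 1
          module
      _ ≤ ‖z - x‖ + ‖x - w‖ := norm_sub_le_norm_sub_add_norm_sub z x w
      _ ≤ rFar K x + ‖x - w‖ := by
          gcongr
          exact norm_sub_le_rFar hK x hz
  rw [← neg_sub x w, map_neg] at subgradient_le
  linarith

theorem dense_interior_almostSupportedSet (hne : K.Nonempty) (hK : IsBounded K) {ε : ℝ}
    (hε : 0 < ε) : Dense (interior (almostSupportedSet K ε)) := by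
  rw [Metric.dense_iff]
  intro y δ hδ
  obtain ⟨l, hl, hlδ⟩ : ∃ l > 0, rFar K y * l < δ := exists_pos_mul_lt hδ _
  obtain ⟨η, hη, hηε⟩ : ∃ η > 0, (3 + l) * η = l * ε :=
    ⟨l * ε / (3 + l), by positivity, mul_div_cancel₀ _ (by positivity)⟩
  obtain ⟨z, hz, hzy⟩ := exists_mem_lt_norm_sub_of_lt_rFar hne (sub_lt_self (rFar K y) hη)
  have ball_subset : ball (y + l • (y - z)) η ⊆ almostSupportedSet K ε := by
    intro x hx f hf
    rw [mem_ball_iff_norm] at hx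
    refine ⟨z, hz, ?_⟩
    have : l * (rFar K x - f (x - z)) < l * ε := by
      calc l * (rFar K x - f (x - z))
          ≤ (1 + l) * (rFar K y - ‖z - y‖) + 2 * ‖x - (y + l • (y - z))‖ :=
            mul_rFar_sub_apply_le hK hz hf hl.le
        _ < (1 + l) * η + 2 * η := by
            gcongr
            linarith
        _ = l * ε := by rw [← hηε]; ring
    linarith [lt_of_mul_lt_mul_left this hl.le]
  refine ⟨y + l • (y - z), ?_, interior_maximal ball_subset isOpen_ball (mem_ball_self hη)⟩
  rw [mem_ball_iff_norm, add_sub_cancel_left, norm_smul_of_nonneg hl.le, norm_sub_rev]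
  calc l * ‖z - y‖ ≤ l * rFar K y := by
        gcongr
        exact norm_sub_le_rFar hK y hz
    _ < δ := by rwa [mul_comm]

theorem mem_QFar_of_isMinOn (hK : IsBounded K) {x z : X} {f : X →L[ℝ] ℝ}
    (hf : f ∈ subdifferential (rFar K) x) (hz : z ∈ K) (hmin : IsMinOn f K z)
    (happrox : ∀ ε > 0, ∃ w ∈ K, rFar K x - ε < f (x - w)) : z ∈ QFar K x := by
  refine ⟨hz, le_antisymm (norm_sub_le_rFar hK x hz) (le_of_forall_pos_lt_add fun ε hε => ?_)⟩
  obtain ⟨w, hw, hlt⟩ := happrox ε hε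
  rw [← sub_lt_iff_lt_add]
  calc rFar K x - ε < f (x - w) := hlt
    _ ≤ f (x - z) := by
        rw [map_sub, map_sub]
        exact sub_le_sub_left (hmin hw) _
    _ ≤ ‖x - z‖ := apply_le_norm_of_mem_subdifferential_rFar ⟨z, hz⟩ hK hf _
    _ = ‖z - x‖ := norm_sub_rev x z

theorem iInter_almostSupportedSet_subset_DFar (hK : IsBounded K)
    (hmin : ∀ f : X →L[ℝ] ℝ, ∃ z ∈ K, IsMinOn f K z) :
    ⋂ n : ℕ, almostSupportedSet K (1 / (n + 1)) ⊆ DFar K := by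
  intro x hx
  have hne : K.Nonempty := (hmin 0).imp fun _ => And.left
  obtain ⟨f, hf⟩ := subdifferential_nonempty (convexOn_rFar hne hK)
    (lipschitzWith_rFar hne hK).continuous x
  obtain ⟨z, hz, hfz⟩ := hmin f
  refine ⟨z, mem_QFar_of_isMinOn hK hf hz hfz fun ε hε => ?_⟩
  obtain ⟨n, hn⟩ := exists_nat_one_div_lt hε
  obtain ⟨w, hw, hlt⟩ := mem_iInter.1 hx n f hf
  exact ⟨w, hw, (sub_lt_sub_left hn _).trans hlt⟩

end Farthest

theorem isBounded_of_forall_isBounded_image {𝕜 E : Type*} [RCLike 𝕜] [NormedAddCommGroup E]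
    [NormedSpace 𝕜 E] {s : Set E} (h : ∀ f : E →L[𝕜] 𝕜, IsBounded (f '' s)) : IsBounded s := by
  obtain ⟨C, hC⟩ : ∃ C, ∀ z : s, ‖NormedSpace.inclusionInDoubleDual 𝕜 E z‖ ≤ C := by
    refine banach_steinhaus fun f => ?_
    obtain ⟨C, hC⟩ := (h f).exists_norm_le
    exact ⟨C, fun z => hC _ (mem_image_of_mem f z.2)⟩
  refine isBounded_iff_forall_norm_le.2 ⟨C, fun z hz => ?_⟩
  rw [← (NormedSpace.inclusionInDoubleDualLi 𝕜 (E := E)).norm_map z]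
  exact hC ⟨z, hz⟩

theorem isBounded_of_forall_exists_isMinOn {E : Type*} [NormedAddCommGroup E] [NormedSpace ℝ E]
    {s : Set E} (h : ∀ f : E →L[ℝ] ℝ, ∃ z ∈ s, IsMinOn f s z) : IsBounded s := by
  refine isBounded_of_forall_isBounded_image (𝕜 := ℝ) fun f => ?_
  obtain ⟨a, -, ha⟩ := h f
  obtain ⟨b, -, hb⟩ := h (-f)
  refine (isBounded_Icc (f a) (f b)).subset (image_subset_iff.2 fun z hz => ⟨ha hz, ?_⟩)
  exact neg_le_neg_iff.1 (hb hz)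

theorem continuous_weakTop {E : Type*} [NormedAddCommGroup E] [NormedSpace ℝ E]
    (f : E →L[ℝ] ℝ) : @Continuous E ℝ (weakTop E) _ f :=
  (@continuous_pi_iff E (E →L[ℝ] ℝ) (fun _ => ℝ) (weakTop E) _ _).1 continuous_induced_dom f

theorem exists_isMinOn_of_isCompact_weakTop {E : Type*} [NormedAddCommGroup E] [NormedSpace ℝ E]
    {K : Set E} (hne : K.Nonempty) (hK : @IsCompact E (weakTop E) K) (f : E →L[ℝ] ℝ) :
    ∃ z ∈ K, IsMinOn f K z :=
  letI := weakTop E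
  hK.exists_isMinOn hne (continuous_weakTop f).continuousOn

theorem stmt_7_general {X : Type*} [NormedAddCommGroup X] [NormedSpace ℝ X] [BaireSpace X]
    {K : Set X} (hmin : ∀ f : X →L[ℝ] ℝ, ∃ z ∈ K, IsMinOn f K z) :
    ∃ G : Set X, G ⊆ DFar K ∧ Dense G ∧ IsGδ G := by
  have hK : IsBounded K := isBounded_of_forall_exists_isMinOn hmin
  have hne : K.Nonempty := (hmin 0).imp fun _ => And.left
  refine ⟨⋂ n : ℕ, interior (almostSupportedSet K (1 / (n + 1))), ?_, ?_,
    .iInter_of_isOpen fun _ => isOpen_interior⟩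
  · exact (iInter_mono fun _ => interior_subset).trans
      (iInter_almostSupportedSet_subset_DFar hK hmin)
  · exact dense_iInter_of_isOpen_nat (fun _ => isOpen_interior)
      fun _ => dense_interior_almostSupportedSet hne hK Nat.one_div_pos_of_nat

/-- Lemma remotal (a) (Lau): any nonempty weakly compact set is almost remotal. -/
theorem stmt_7 {X : Type*} [NormedAddCommGroup X] [NormedSpace ℝ X] [CompleteSpace X]
    (K : Set X) (hne : K.Nonempty) (hK : @IsCompact X (weakTop X) K) :
    ∃ G : Set X, G ⊆ DFar K ∧ Dense G ∧ IsGδ G :=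
  stmt_7_general (exists_isMinOn_of_isCompact_weakTop hne hK)
end
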